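/- Assume hypothesis (H). Then there exist constants κ₁ > 0, κ₂ > 0 and h₀ > 0, depending only on N, a, b, c and u_b, with the following property. For every straight mesh on [a,c] and inverse mesh on [0,u_b] whose maximal step size h satisfies h ≤ h₀, and for every scheme pair (ũ, x̃) additionally satisfying the inequalities 0 < ũ(x) < u_b, ũ'(x) > 0, ũ''(x) ≥ 0 on (a,c] and c < x̃(v), x̃'(v) > 0, x̃''(v) ≤ 0 on (ũ(c), u_b] (second derivatives taken on mesh subintervals), there exists x̂ ∈ C²([0,u_b]) with x̂''(v) = −𝒩(v, x̂(v))·(x̂'(v))³ on [0,u_b], x̂(0) = a and x̂'(0) = 1/ũ'(a), such that x̂ is strictly increasing, its image contains [a,c], and, writing û = x̂⁻¹ for the inverse function of x̂, one has max_{x ∈ [a,c]} max(|ũ(x) − û(x)|, |ũ'(x) − û'(x)|) ≤ κ₁·h² and max_{v ∈ [ũ(c), u_b]} max(|x̃(v) − x̂(v)|, |x̃'(v) − x̂'(v)|) ≤ κ₂·h². -/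

import Mathlib

open Set Filter

noncomputable section

/-- Partial derivative of a two-argument function with respect to its first argument. -/
def pd1 (f : ℝ → ℝ → ℝ) (u x : ℝ) : ℝ := deriv (fun t => f t x) u

/-- Partial derivative of a two-argument function with respect to its second argument. -/
def pd2 (f : ℝ → ℝ → ℝ) (u x : ℝ) : ℝ := deriv (fun s => f u s) x

/-- The nonlinearity `𝒩(u,x) = N(u,x)·u`. -/
def Ncal (N : ℝ → ℝ → ℝ) (u x : ℝ) : ℝ := N u x * u

/-- `u` is twice continuously differentiable on `s`, with first derivative `u'`
and second derivative `u''` (derivatives within `s`). -/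
def IsC2On (u u' u'' : ℝ → ℝ) (s : Set ℝ) : Prop :=
  (∀ x ∈ s, HasDerivWithinAt u (u' x) s x) ∧
  (∀ x ∈ s, HasDerivWithinAt u' (u'' x) s x) ∧
  ContinuousOn u'' s

/-- The straight boundary value problem: `u ∈ C²([a,b])`, `u'' = 𝒩(u(x),x)` on `[a,b]`,
`u(a) = 0`, `u(b) = ub`. -/
def IsStraightBVP (N : ℝ → ℝ → ℝ) (a b ub : ℝ) (u u' u'' : ℝ → ℝ) : Prop :=
  IsC2On u u' u'' (Icc a b) ∧
  (∀ x ∈ Icc a b, u'' x = Ncal N (u x) x) ∧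
  u a = 0 ∧ u b = ub

/-- Hypothesis (H): `N`, `∂N/∂x`, `∂N/∂u`, `∂²N/∂x∂u`, `∂²N/∂u²` are all
nonnegative for `u ≥ 0` and `x ∈ [a,b]`. -/
def HypH (N : ℝ → ℝ → ℝ) (a b : ℝ) : Prop :=
  ∀ u : ℝ, 0 ≤ u → ∀ x ∈ Icc a b,
    0 ≤ N u x ∧ 0 ≤ pd2 N u x ∧ 0 ≤ pd1 N u x ∧
    0 ≤ pd2 (pd1 N) u x ∧ 0 ≤ pd1 (pd1 N) u x

/-- A mesh: finitely many strictly increasing points `pt 0 < pt 1 < ⋯ < pt n`. -/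
structure Mesh where
  n : ℕ
  pt : ℕ → ℝ
  npos : 0 < n
  mono : ∀ i < n, pt i < pt (i + 1)

/-- The coefficient `α_i(p,q,x)` of the straight discretized equation,
where `xi` is the mesh point `x_i`. -/
def alphaC (N : ℝ → ℝ → ℝ) (xi p q x : ℝ) : ℝ :=
  (pd1 N q xi * p + pd2 N q xi) * (x - xi) + N q xi

/-- The coefficient `β_i(p,q,v)` of the inverse discretized equation,
where `ui` is the (shifted) mesh point `ū_i`. -/
def betaC (N : ℝ → ℝ → ℝ) (ui p q v : ℝ) : ℝ :=
  -(pd1 (Ncal N) ui q + pd2 (Ncal N) ui q * p) * (v - ui) - Ncal N ui q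

/-- Shifted mesh knots `ū_i = max(u_i, s)`. -/
def ubar (m : Mesh) (s : ℝ) (i : ℕ) : ℝ := max (m.pt i) s

/-- A straight scheme solution on `[a,c]` with respect to the mesh `m`:
`ũ ∈ C¹([a,c])` and on each mesh subinterval `[x_i, x_{i+1}]` the second
derivative of `ũ` equals `α_i(ũ'(x_i), ũ(x_i), x)·ũ(x)`. -/
def IsStraightSol (N : ℝ → ℝ → ℝ) (a c : ℝ) (m : Mesh) (u u' : ℝ → ℝ) : Prop :=
  (∀ x ∈ Icc a c, HasDerivWithinAt u (u' x) (Icc a c) x) ∧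
  ContinuousOn u' (Icc a c) ∧
  ∀ i < m.n, ∀ x ∈ Icc (m.pt i) (m.pt (i + 1)),
    HasDerivWithinAt u'
      (alphaC N (m.pt i) (u' (m.pt i)) (u (m.pt i)) x * u x)
      (Icc (m.pt i) (m.pt (i + 1))) x

/-- An inverse scheme solution on `[s, ub]` with respect to the mesh `m` (shifted by `s`):
`x̃ ∈ C¹([s,ub])` and on each subinterval `[ū_i, ū_{i+1}]` the second derivative of `x̃`
equals `β_i(x̃'(ū_i), x̃(ū_i), v)·(x̃'(v))³`. -/
def IsInvSol (N : ℝ → ℝ → ℝ) (ub : ℝ) (m : Mesh) (s : ℝ) (X X' : ℝ → ℝ) : Prop :=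
  (∀ v ∈ Icc s ub, HasDerivWithinAt X (X' v) (Icc s ub) v) ∧
  ContinuousOn X' (Icc s ub) ∧
  ∀ i < m.n, ∀ v ∈ Icc (ubar m s i) (ubar m s (i + 1)),
    HasDerivWithinAt X'
      (betaC N (ubar m s i) (X' (ubar m s i)) (X (ubar m s i)) v * (X' v) ^ 3)
      (Icc (ubar m s i) (ubar m s (i + 1))) v

/-- A scheme pair `(ũ, x̃)`. -/
def IsSchemePair (N : ℝ → ℝ → ℝ) (a b c ub : ℝ) (ms mi : Mesh)
    (u u' X X' : ℝ → ℝ) : Prop :=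
  IsStraightSol N a c ms u u' ∧ u a = 0 ∧ 0 < u c ∧ u c < ub ∧ u' c ≠ 0 ∧
  IsInvSol N ub mi (u c) X X' ∧ X ub = b ∧ X (u c) = c ∧ X' (u c) = 1 / u' c

/-- A scheme pair additionally satisfying the sign inequalities
`0 < ũ < u_b`, `ũ' > 0`, `ũ'' ≥ 0` on `(a,c]`, and `c < x̃`, `x̃' > 0`, `x̃'' ≤ 0`
on `(ũ(c), u_b]` (second derivatives taken on the mesh subintervals). -/
def GoodPair (N : ℝ → ℝ → ℝ) (a b c ub : ℝ) (ms mi : Mesh)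
    (u u' X X' : ℝ → ℝ) : Prop :=
  IsSchemePair N a b c ub ms mi u u' X X' ∧
  (∀ x ∈ Ioc a c, 0 < u x ∧ u x < ub ∧ 0 < u' x) ∧
  (∀ i < ms.n, ∀ x ∈ Icc (ms.pt i) (ms.pt (i + 1)), x ∈ Ioc a c →
    0 ≤ alphaC N (ms.pt i) (u' (ms.pt i)) (u (ms.pt i)) x * u x) ∧
  (∀ v ∈ Ioc (u c) ub, c < X v ∧ 0 < X' v) ∧
  (∀ i < mi.n, ∀ v ∈ Icc (ubar mi (u c) i) (ubar mi (u c) (i + 1)), v ∈ Ioc (u c) ub →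
    betaC N (ubar mi (u c) i) (X' (ubar mi (u c) i)) (X (ubar mi (u c) i)) v * (X' v) ^ 3 ≤ 0)

/-- All steps of the straight mesh `ms` and of the (shifted) inverse mesh `mi`
are of size at most `h`. -/
def StepLe (ms mi : Mesh) (s h : ℝ) : Prop :=
  (∀ i < ms.n, ms.pt (i + 1) - ms.pt i ≤ h) ∧
  (∀ i < mi.n, ubar mi s (i + 1) - ubar mi s i ≤ h)

/-! ### Right derivatives -/

theorem HasDerivWithinAt.Ici_of_Icc {f : ℝ → ℝ} {f' a b x : ℝ}
    (hf : HasDerivWithinAt f f' (Icc a b) x) (hx : x ∈ Ico a b) :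
    HasDerivWithinAt f f' (Ici x) x :=
  (hf.mono (Icc_subset_Icc_left hx.1)).mono_of_mem_nhdsWithin (Icc_mem_nhdsGE hx.2)

theorem monotoneOn_of_rightDeriv_nonneg {f f' : ℝ → ℝ} {a b : ℝ}
    (hf : ContinuousOn f (Icc a b)) (hf' : ∀ x ∈ Ico a b, HasDerivWithinAt f (f' x) (Ici x) x)
    (h0 : ∀ x ∈ Ico a b, 0 ≤ f' x) : MonotoneOn f (Icc a b) := by
  intro x hx y hy hxy
  have hsub : Icc x y ⊆ Icc a b := Icc_subset_Icc hx.1 hy.2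
  have hsub' : Ico x y ⊆ Ico a b := Ico_subset_Ico hx.1 hy.2
  exact image_le_of_deriv_right_le_deriv_boundary (f := fun _ => f x) (f' := fun _ => 0)
    continuousOn_const (fun _ _ => hasDerivWithinAt_const _ _ _) le_rfl (hf.mono hsub)
    (fun t ht => hf' t (hsub' ht)) (fun t ht => h0 t (hsub' ht)) ⟨hxy, le_rfl⟩

theorem antitoneOn_of_rightDeriv_nonpos {f f' : ℝ → ℝ} {a b : ℝ}
    (hf : ContinuousOn f (Icc a b)) (hf' : ∀ x ∈ Ico a b, HasDerivWithinAt f (f' x) (Ici x) x)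
    (h0 : ∀ x ∈ Ico a b, f' x ≤ 0) : AntitoneOn f (Icc a b) := by
  have := monotoneOn_of_rightDeriv_nonneg hf.neg (fun x hx => (hf' x hx).neg)
    (fun x hx => neg_nonneg.2 (h0 x hx))
  intro x hx y hy hxy
  simpa using this hx hy hxy

/-- First-order Taylor estimate when the derivative has a bounded right derivative. -/
theorem abs_taylor_one_le_of_rightDeriv {f f' f'' : ℝ → ℝ} {a b B : ℝ} (hab : a ≤ b) (hB : 0 ≤ B)
    (hf : ContinuousOn f (Icc a b)) (hf' : ∀ x ∈ Ico a b, HasDerivWithinAt f (f' x) (Ici x) x)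
    (hcf' : ContinuousOn f' (Icc a b))
    (hf'' : ∀ x ∈ Ico a b, HasDerivWithinAt f' (f'' x) (Ici x) x)
    (bound : ∀ x ∈ Ico a b, |f'' x| ≤ B) :
    |f b - f a - f' a * (b - a)| ≤ B * (b - a) ^ 2 := by
  have h1 : ∀ x ∈ Icc a b, ‖f' x - f' a‖ ≤ B * (x - a) :=
    norm_image_sub_le_of_norm_deriv_right_le_segment hcf' hf'' bound
  have h2 := norm_image_sub_le_of_norm_deriv_right_le_segment
    (f := fun x => f x - f' a * x) (f' := fun x => f' x - f' a) (C := B * (b - a))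
    (hf.sub (by fun_prop))
    (fun x hx => by
      simpa using (hf' x hx).fun_sub ((hasDerivWithinAt_id x (Ici x)).const_mul (f' a)))
    (fun x hx => (h1 x ⟨hx.1, hx.2.le⟩).trans
      (mul_le_mul_of_nonneg_left (by linarith [hx.2]) hB)) b ⟨hab, le_rfl⟩
  rw [Real.norm_eq_abs] at h2
  calc _ = |f b - f' a * b - (f a - f' a * a)| := by congr 1; ring
    _ ≤ _ := h2
    _ = _ := by ring

theorem gronwallBound_le_of_pos {δ K ε x T : ℝ} (hδ : 0 ≤ δ) (hK : 0 < K) (hε : 0 ≤ ε)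
    (hxT : x ≤ T) :
    gronwallBound δ K ε x ≤ (δ + ε / K) * Real.exp (K * T) := by
  rw [gronwallBound_of_K_ne_0 hK.ne']
  have h1 : Real.exp (K * x) ≤ Real.exp (K * T) := by gcongr
  have h2 : 0 ≤ ε / K := by positivity
  nlinarith

/-! ### Smooth functions on compact boxes -/

theorem ContDiff.exists_lipschitz_of_isCompact {E F : Type*} [NormedAddCommGroup E]
    [NormedSpace ℝ E] [NormedAddCommGroup F] [NormedSpace ℝ F] {f : E → F} (hf : ContDiff ℝ 1 f)
    {s : Set E} (hs : IsCompact s) :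
    ∃ C : ℝ, 0 < C ∧ ∀ x ∈ s, ∀ y ∈ s, ‖f x - f y‖ ≤ C * ‖x - y‖ := by
  obtain ⟨K, hK⟩ := LocallyLipschitzOn.exists_lipschitzOnWith_of_compact hs
    (hf.locallyLipschitz.locallyLipschitzOn (s := s))
  refine ⟨K + 1, by positivity, fun x hx y hy => ?_⟩
  have := hK.dist_le_mul x hx y hy
  rw [dist_eq_norm, dist_eq_norm] at this
  nlinarith [norm_nonneg (x - y)]

theorem exists_bound_of_continuous {E F : Type*} [TopologicalSpace E] [NormedAddCommGroup F]
    {f : E → F} (hf : Continuous f) {s : Set E} (hs : IsCompact s) :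
    ∃ C : ℝ, 0 < C ∧ ∀ x ∈ s, ‖f x‖ ≤ C := by
  obtain ⟨C, hC⟩ := hs.exists_bound_of_continuousOn hf.continuousOn
  exact ⟨max C 1, by positivity, fun x hx => (hC x hx).trans (le_max_left _ _)⟩

theorem pd1_eq_fderiv {F : ℝ → ℝ → ℝ} (hF : Differentiable ℝ (Function.uncurry F)) (u x : ℝ) :
    pd1 F u x = fderiv ℝ (Function.uncurry F) (u, x) (1, 0) := by
  have h := (hF (u, x)).hasFDerivAt.comp_hasDerivAt u
    ((hasDerivAt_id u).prodMk (hasDerivAt_const u x))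
  exact h.deriv

theorem pd2_eq_fderiv {F : ℝ → ℝ → ℝ} (hF : Differentiable ℝ (Function.uncurry F)) (u x : ℝ) :
    pd2 F u x = fderiv ℝ (Function.uncurry F) (u, x) (0, 1) := by
  have h := (hF (u, x)).hasFDerivAt.comp_hasDerivAt x
    ((hasDerivAt_const x u).prodMk (hasDerivAt_id x))
  exact h.deriv

theorem continuous_pd1 {F : ℝ → ℝ → ℝ} (hF : ContDiff ℝ 2 (Function.uncurry F)) :
    Continuous (Function.uncurry (pd1 F)) := by
  have h := (hF.continuous_fderiv (by norm_num)).clm_apply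
    (continuous_const (y := ((1 : ℝ), (0 : ℝ))))
  exact h.congr fun p => (pd1_eq_fderiv (hF.differentiable (by norm_num)) p.1 p.2).symm

theorem continuous_pd2 {F : ℝ → ℝ → ℝ} (hF : ContDiff ℝ 2 (Function.uncurry F)) :
    Continuous (Function.uncurry (pd2 F)) := by
  have h := (hF.continuous_fderiv (by norm_num)).clm_apply
    (continuous_const (y := ((0 : ℝ), (1 : ℝ))))
  exact h.congr fun p => (pd2_eq_fderiv (hF.differentiable (by norm_num)) p.1 p.2).symm

/-- Second-order Taylor remainder bound on a box. -/
theorem exists_taylor_two_bound {F : ℝ → ℝ → ℝ} (hF : ContDiff ℝ 2 (Function.uncurry F))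
    (u₀ u₁ x₀ x₁ : ℝ) :
    ∃ C : ℝ, 0 < C ∧ ∀ u ∈ Icc u₀ u₁, ∀ x ∈ Icc x₀ x₁, ∀ v ∈ Icc u₀ u₁, ∀ y ∈ Icc x₀ x₁,
      |F v y - F u x - pd1 F u x * (v - u) - pd2 F u x * (y - x)|
        ≤ C * (|v - u| + |y - x|) ^ 2 := by
  have hd : Differentiable ℝ (Function.uncurry F) := hF.differentiable (by norm_num)
  obtain ⟨C, hC, hL⟩ := ContDiff.exists_lipschitz_of_isCompact
    (hF.fderiv_right (m := 1) (by norm_num)) ((isCompact_Icc (a := u₀) (b := u₁)).prod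
      (isCompact_Icc (a := x₀) (b := x₁)))
  refine ⟨C, hC, fun u hu x hx v hv y hy => ?_⟩
  have hseg : segment ℝ (u, x) (v, y) ⊆ Icc u₀ u₁ ×ˢ Icc x₀ x₁ :=
    ((convex_Icc u₀ u₁).prod (convex_Icc x₀ x₁)).segment_subset ⟨hu, hx⟩ ⟨hv, hy⟩
  have h := Convex.norm_image_sub_le_of_norm_fderiv_le' (𝕜 := ℝ) (f := Function.uncurry F)
    (s := segment ℝ (u, x) (v, y)) (φ := fderiv ℝ (Function.uncurry F) (u, x))
    (C := C * ‖((v, y) : ℝ × ℝ) - (u, x)‖) (fun z _ => hd z)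
    (fun z hz => (hL z (hseg hz) (u, x) ⟨hu, hx⟩).trans (mul_le_mul_of_nonneg_left
      (by simpa using norm_sub_le_of_mem_segment hz) hC.le))
    (convex_segment _ _) (left_mem_segment ℝ _ _) (right_mem_segment ℝ _ _)
  have hlin : fderiv ℝ (Function.uncurry F) (u, x) ((v, y) - (u, x))
      = pd1 F u x * (v - u) + pd2 F u x * (y - x) := by
    rw [pd1_eq_fderiv hd, pd2_eq_fderiv hd,
      show ((v, y) - (u, x) : ℝ × ℝ) = (v - u) • (1, 0) + (y - x) • (0, 1) by simp, map_add,
      map_smul, map_smul, smul_eq_mul, smul_eq_mul]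
    ring
  rw [hlin, Real.norm_eq_abs] at h
  have hn : ‖((v, y) : ℝ × ℝ) - (u, x)‖ ≤ |v - u| + |y - x| := by
    rw [Prod.mk_sub_mk, Prod.norm_mk, Real.norm_eq_abs, Real.norm_eq_abs]
    exact max_le_add_of_nonneg (abs_nonneg _) (abs_nonneg _)
  calc _ = |Function.uncurry F (v, y) - Function.uncurry F (u, x) -
        (pd1 F u x * (v - u) + pd2 F u x * (y - x))| := by
        simp only [Function.uncurry]; congr 1; ring
    _ ≤ _ := h
    _ = C * ‖((v, y) : ℝ × ℝ) - (u, x)‖ ^ 2 := by ring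
    _ ≤ _ := by gcongr

theorem contDiff_Ncal {N : ℝ → ℝ → ℝ} (hN : ContDiff ℝ 2 (Function.uncurry N)) :
    ContDiff ℝ 2 (Function.uncurry (Ncal N)) :=
  hN.mul contDiff_fst

theorem pd1_Ncal {N : ℝ → ℝ → ℝ} (hN : Differentiable ℝ (Function.uncurry N)) (u x : ℝ) :
    pd1 (Ncal N) u x = pd1 N u x * u + N u x := by
  have h : DifferentiableAt ℝ (fun t => N t x) u :=
    DifferentiableAt.comp (g := Function.uncurry N) (f := fun t => (t, x)) u (hN (u, x))
      (differentiableAt_id.prodMk (differentiableAt_const x))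
  simpa [pd1, Ncal] using (h.hasDerivAt.fun_mul (hasDerivAt_id u)).deriv

theorem pd2_Ncal (N : ℝ → ℝ → ℝ) (u x : ℝ) : pd2 (Ncal N) u x = pd2 N u x * u := by
  simp [pd2, Ncal]

/-! ### The schemes in terms of right derivatives -/

theorem exists_cell_of_mem_Ico {f : ℕ → ℝ} {x : ℝ} (n : ℕ) (h0 : f 0 ≤ x) (hn : x < f n) :
    ∃ i < n, f i ≤ x ∧ x < f (i + 1) := by
  induction n with
  | zero => exact absurd h0 (not_le.2 hn)
  | succ k ih =>
    rcases lt_or_ge x (f k) with h | h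
    · obtain ⟨i, hi, hx⟩ := ih h
      exact ⟨i, hi.trans (Nat.lt_succ_self k), hx⟩
    · exact ⟨k, Nat.lt_succ_self k, h, hn⟩

theorem Mesh.pt_zero_le (m : Mesh) {i : ℕ} (hi : i ≤ m.n) : m.pt 0 ≤ m.pt i := by
  induction i with
  | zero => exact le_rfl
  | succ k ih => exact (ih (by omega)).trans (m.mono k (by omega)).le

theorem StepLe.pos {ms mi : Mesh} {s h : ℝ} (hs : StepLe ms mi s h) : 0 < h :=
  (sub_pos.2 (ms.mono 0 ms.npos)).trans_le (hs.1 0 ms.npos)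

/-- A scheme pair satisfying the sign conditions, with its second derivatives `u''`, `X''` recorded
as right derivatives; the base point of the cell containing a given point is left existential. -/
structure RightScheme (N : ℝ → ℝ → ℝ) (a b c ub h : ℝ) (u u' u'' X X' X'' : ℝ → ℝ) : Prop where
  deriv_u : ∀ x ∈ Icc a c, HasDerivWithinAt u (u' x) (Icc a c) x
  cont_u' : ContinuousOn u' (Icc a c)
  deriv_u' : ∀ x ∈ Ico a c, HasDerivWithinAt u' (u'' x) (Ici x) x
  u''_eq : ∀ x ∈ Ico a c, ∃ y ∈ Icc a x, x - y ≤ h ∧ u'' x = alphaC N y (u' y) (u y) x * u x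
  u''_nonneg : ∀ x ∈ Ico a c, 0 ≤ u'' x
  u_left : u a = 0
  u'_left_nonneg : 0 ≤ u' a
  u_mem : ∀ x ∈ Icc a c, u x ∈ Icc 0 ub
  u_right_pos : 0 < u c
  u_right_lt : u c < ub
  u'_right_pos : 0 < u' c
  deriv_X : ∀ v ∈ Icc (u c) ub, HasDerivWithinAt X (X' v) (Icc (u c) ub) v
  cont_X' : ContinuousOn X' (Icc (u c) ub)
  deriv_X' : ∀ v ∈ Ico (u c) ub, HasDerivWithinAt X' (X'' v) (Ici v) v
  X''_eq : ∀ v ∈ Ico (u c) ub, ∃ w ∈ Icc (u c) v, v - w ≤ h ∧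
    X'' v = betaC N w (X' w) (X w) v * (X' v) ^ 3
  X''_nonpos : ∀ v ∈ Ico (u c) ub, X'' v ≤ 0
  X_left : X (u c) = c
  X_right : X ub = b
  X'_left : X' (u c) = 1 / u' c
  X'_pos : ∀ v ∈ Icc (u c) ub, 0 < X' v

theorem GoodPair.exists_rightScheme {N : ℝ → ℝ → ℝ} {a b c ub h : ℝ} {ms mi : Mesh}
    {u u' X X' : ℝ → ℝ} (hc : c ∈ Ioo a b) (hH : HypH N a b)
    (hg : GoodPair N a b c ub ms mi u u' X X')
    (ms0 : ms.pt 0 = a) (msn : ms.pt ms.n = c) (mi0 : mi.pt 0 = 0) (min : mi.pt mi.n = ub)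
    (hstep : StepLe ms mi (u c) h) :
    ∃ u'' X'' : ℝ → ℝ, RightScheme N a b c ub h u u' u'' X X' X'' := by
  obtain ⟨⟨⟨du, cu', hu'⟩, ua, ucpos, uclt, -, ⟨dX, cX', hX'⟩, Xub, Xs, X's⟩, hsu, hsu2, hsX,
    hsX2⟩ := hg
  have hne : (nhdsWithin a (Ioc a c)).NeBot := left_nhdsWithin_Ioc_neBot hc.1
  have hu'c : 0 < u' c := (hsu c ⟨hc.1, le_rfl⟩).2.2
  have hX'pos : ∀ v ∈ Icc (u c) ub, 0 < X' v := by
    intro v hv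
    rcases hv.1.eq_or_lt with h | h
    · rw [← h, X's]; positivity
    · exact (hsX v ⟨h, hv.2⟩).2
  have key_u : ∀ x, ∃ d, x ∈ Ico a c → HasDerivWithinAt u' d (Ici x) x ∧ 0 ≤ d ∧
      ∃ y ∈ Icc a x, x - y ≤ h ∧ d = alphaC N y (u' y) (u y) x * u x := by
    intro x
    by_cases hx : x ∈ Ico a c
    swap
    · exact ⟨0, fun h => absurd h hx⟩
    obtain ⟨i, hi, hix, hxi⟩ := exists_cell_of_mem_Ico (f := ms.pt) ms.n
      (ms0.trans_le hx.1) (hx.2.trans_eq msn.symm)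
    refine ⟨_, fun _ => ⟨(hu' i hi x ⟨hix, hxi.le⟩).Ici_of_Icc ⟨hix, hxi⟩, ?_, ms.pt i,
      ⟨ms0 ▸ ms.pt_zero_le hi.le, hix⟩, by linarith [hstep.1 i hi], rfl⟩⟩
    rcases hx.1.eq_or_lt with h | h
    · rw [← h, ua, mul_zero]
    · exact hsu2 i hi x ⟨hix, hxi.le⟩ ⟨h, hx.2.le⟩
  have key_X : ∀ v, ∃ d, v ∈ Ico (u c) ub → HasDerivWithinAt X' d (Ici v) v ∧ d ≤ 0 ∧
      ∃ w ∈ Icc (u c) v, v - w ≤ h ∧ d = betaC N w (X' w) (X w) v * (X' v) ^ 3 := by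
    intro v
    by_cases hv : v ∈ Ico (u c) ub
    swap
    · exact ⟨0, fun h => absurd h hv⟩
    obtain ⟨i, hi, hiv, hvi⟩ := exists_cell_of_mem_Ico (f := ubar mi (u c)) mi.n
      (by simpa [ubar, mi0, ucpos.le] using hv.1) (by simpa [ubar, min] using Or.inl hv.2)
    have hle : u c ≤ ubar mi (u c) i := le_max_right _ _
    refine ⟨_, fun _ => ⟨(hX' i hi v ⟨hiv, hvi.le⟩).Ici_of_Icc ⟨hiv, hvi⟩, ?_, ubar mi (u c) i,
      ⟨hle, hiv⟩, by linarith [hstep.2 i hi], rfl⟩⟩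
    rcases hv.1.eq_or_lt with h | h
    · have he : ubar mi (u c) i = u c := le_antisymm (h ▸ hiv) hle
      have hN := (hH (u c) ucpos.le c ⟨hc.1.le, hc.2.le⟩).1
      have hp := hX'pos v ⟨hv.1, hv.2.le⟩
      rw [he, ← h, Xs] at *
      have : betaC N (u c) (X' (u c)) c (u c) ≤ 0 := by
        simp only [betaC, Ncal, sub_self, mul_zero, zero_sub, neg_nonpos]
        positivity
      exact mul_nonpos_of_nonpos_of_nonneg this (by positivity)
    · exact hsX2 i hi v ⟨hiv, hvi.le⟩ ⟨h, hv.2.le⟩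
  choose u'' hu'' using key_u
  choose X'' hX'' using key_X
  exact ⟨u'', X'',
    { deriv_u := du
      cont_u' := cu'
      deriv_u' := fun x hx => (hu'' x hx).1
      u''_eq := fun x hx => (hu'' x hx).2.2
      u''_nonneg := fun x hx => (hu'' x hx).2.1
      u_left := ua
      u'_left_nonneg := ge_of_tendsto
        ((cu' a ⟨le_rfl, hc.1.le⟩).mono_left (nhdsWithin_mono a Ioc_subset_Icc_self))
        (eventually_nhdsWithin_of_forall fun x hx => (hsu x hx).2.2.le)
      u_mem := fun x hx => by
        rcases hx.1.eq_or_lt with h | h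
        · rw [← h, ua]; exact ⟨le_rfl, (ucpos.trans uclt).le⟩
        · exact ⟨(hsu x ⟨h, hx.2⟩).1.le, (hsu x ⟨h, hx.2⟩).2.1.le⟩
      u_right_pos := ucpos
      u_right_lt := uclt
      u'_right_pos := hu'c
      deriv_X := dX
      cont_X' := cX'
      deriv_X' := fun v hv => (hX'' v hv).1
      X''_eq := fun v hv => (hX'' v hv).2.2
      X''_nonpos := fun v hv => (hX'' v hv).2.1
      X_left := Xs
      X_right := Xub
      X'_left := X's
      X'_pos := hX'pos }⟩

/-! ### A priori bounds -/

namespace RightScheme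

variable {N : ℝ → ℝ → ℝ} {a b c ub h : ℝ} {u u' u'' X X' X'' : ℝ → ℝ}

theorem cont_u (S : RightScheme N a b c ub h u u' u'' X X' X'') : ContinuousOn u (Icc a c) :=
  fun x hx => (S.deriv_u x hx).continuousWithinAt

theorem cont_X (S : RightScheme N a b c ub h u u' u'' X X' X'') :
    ContinuousOn X (Icc (u c) ub) :=
  fun v hv => (S.deriv_X v hv).continuousWithinAt

theorem rightDeriv_u (S : RightScheme N a b c ub h u u' u'' X X' X'') {x : ℝ} (hx : x ∈ Ico a c) :
    HasDerivWithinAt u (u' x) (Ici x) x :=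
  (S.deriv_u x ⟨hx.1, hx.2.le⟩).Ici_of_Icc hx

theorem rightDeriv_X (S : RightScheme N a b c ub h u u' u'' X X' X'') {v : ℝ}
    (hv : v ∈ Ico (u c) ub) : HasDerivWithinAt X (X' v) (Ici v) v :=
  (S.deriv_X v ⟨hv.1, hv.2.le⟩).Ici_of_Icc hv

theorem u'_monotoneOn (S : RightScheme N a b c ub h u u' u'' X X' X'') :
    MonotoneOn u' (Icc a c) :=
  monotoneOn_of_rightDeriv_nonneg S.cont_u' S.deriv_u' S.u''_nonneg

theorem X'_antitoneOn (S : RightScheme N a b c ub h u u' u'' X X' X'') :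
    AntitoneOn X' (Icc (u c) ub) :=
  antitoneOn_of_rightDeriv_nonpos S.cont_X' S.deriv_X' S.X''_nonpos

theorem u'_right_mul_le (S : RightScheme N a b c ub h u u' u'' X X' X'') :
    u' c * (b - c) ≤ ub := by
  have hlt := S.u_right_lt
  have hm : MonotoneOn (fun v => X' (u c) * v - X v) (Icc (u c) ub) := by
    refine monotoneOn_of_rightDeriv_nonneg (f' := fun v => X' (u c) - X' v)
      (ContinuousOn.sub (by fun_prop) S.cont_X) (fun v hv => ?_) (fun v hv => ?_)
    · simpa using ((hasDerivWithinAt_id v (Ici v)).const_mul (X' (u c))).fun_sub (S.rightDeriv_X hv)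
    · exact sub_nonneg.2 (S.X'_antitoneOn ⟨le_rfl, hlt.le⟩ ⟨hv.1, hv.2.le⟩ hv.1)
  have h1 := hm ⟨le_rfl, hlt.le⟩ ⟨hlt.le, le_rfl⟩ hlt.le
  have hp := S.u'_right_pos
  simp only [S.X_left, S.X_right, S.X'_left] at h1
  have h2 : b - c ≤ (ub - u c) / u' c := by
    calc b - c ≤ 1 / u' c * ub - 1 / u' c * u c := by linarith
      _ = _ := by ring
  rw [le_div_iff₀ hp] at h2
  linarith [S.u_right_pos]

theorem u_right_le (S : RightScheme N a b c ub h u u' u'' X X' X'') (hac : a ≤ c) :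
    u c ≤ u' c * (c - a) := by
  have hm : MonotoneOn (fun x => u' c * x - u x) (Icc a c) := by
    refine monotoneOn_of_rightDeriv_nonneg (f' := fun x => u' c - u' x)
      (ContinuousOn.sub (by fun_prop) S.cont_u) (fun x hx => ?_) (fun x hx => ?_)
    · simpa using ((hasDerivWithinAt_id x (Ici x)).const_mul (u' c)).fun_sub (S.rightDeriv_u hx)
    · exact sub_nonneg.2 (S.u'_monotoneOn ⟨hx.1, hx.2.le⟩ ⟨hac, le_rfl⟩ hx.2.le)
  have h1 := hm ⟨le_rfl, hac⟩ ⟨hac, le_rfl⟩ hac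
  simp only [S.u_left] at h1
  linarith

theorem X_mem (S : RightScheme N a b c ub h u u' u'' X X' X'') {v : ℝ} (hv : v ∈ Icc (u c) ub) :
    X v ∈ Icc c b := by
  have hm : MonotoneOn X (Icc (u c) ub) :=
    monotoneOn_of_rightDeriv_nonneg S.cont_X (fun v hv => S.rightDeriv_X hv)
      (fun v hv => (S.X'_pos v ⟨hv.1, hv.2.le⟩).le)
  have hlt := S.u_right_lt.le
  exact ⟨S.X_left ▸ hm ⟨le_rfl, hlt⟩ hv hv.1, S.X_right ▸ hm hv ⟨hlt, le_rfl⟩ hv.2⟩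

theorem mul_X'_le (S : RightScheme N a b c ub h u u' u'' X X' X'') (hac : a ≤ c) {v : ℝ}
    (hv : v ∈ Icc (u c) ub) : v * X' v ≤ b - a := by
  have hm : MonotoneOn (fun v => X v - v * X' v) (Icc (u c) ub) := by
    refine monotoneOn_of_rightDeriv_nonneg (f' := fun v => -(v * X'' v))
      (S.cont_X.sub (continuousOn_id.mul S.cont_X')) (fun v hv => ?_) (fun v hv => ?_)
    · refine ((S.rightDeriv_X hv).fun_sub
        ((hasDerivWithinAt_id v (Ici v)).fun_mul (S.deriv_X' v hv))).congr_deriv ?_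
      simp
    · exact neg_nonneg.2 (mul_nonpos_of_nonneg_of_nonpos (S.u_right_pos.le.trans hv.1)
        (S.X''_nonpos v hv))
  have h1 := hm ⟨le_rfl, S.u_right_lt.le⟩ hv hv.1
  have h2 : u c * X' (u c) ≤ c - a := by
    rw [S.X'_left, mul_one_div, div_le_iff₀ S.u'_right_pos]
    linarith [S.u_right_le hac]
  simp only [S.X_left] at h1
  linarith [(S.X_mem hv).2]

variable {K : ℝ}

theorem abs_u''_le (S : RightScheme N a b c ub h u u' u'' X X' X'') (hac : a < c) (hcb : c < b)
    (hub : 0 < ub)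
    (hK : ∀ v ∈ Icc 0 ub, ∀ x ∈ Icc a b, |N v x| ≤ K ∧ |pd1 N v x| ≤ K ∧ |pd2 N v x| ≤ K)
    {x : ℝ} (hx : x ∈ Ico a c) :
    |u'' x| ≤ ((K * (ub / (b - c)) + K) * (b - a) + K) * |u x| := by
  obtain ⟨y, hy, -, he⟩ := S.u''_eq x hx
  have hyc : y ∈ Icc a c := ⟨hy.1, hy.2.trans hx.2.le⟩
  obtain ⟨k0, k1, k2⟩ := hK (u y) (S.u_mem y hyc) y ⟨hy.1, hyc.2.trans hcb.le⟩
  have hK0 : 0 ≤ K := (abs_nonneg _).trans k0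
  have hp0 : 0 ≤ u' y := S.u'_left_nonneg.trans (S.u'_monotoneOn ⟨le_rfl, hac.le⟩ hyc hyc.1)
  have hp1 : u' y ≤ ub / (b - c) := by
    rw [le_div_iff₀ (by linarith)]
    refine le_trans ?_ S.u'_right_mul_le
    exact mul_le_mul_of_nonneg_right (S.u'_monotoneOn hyc ⟨hac.le, le_rfl⟩ hyc.2) (by linarith)
  rw [he, abs_mul]
  refine mul_le_mul_of_nonneg_right ?_ (abs_nonneg _)
  have hxy : 0 ≤ x - y := sub_nonneg.2 hy.2
  have hMp : 0 ≤ ub / (b - c) := hp0.trans hp1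
  calc |alphaC N y (u' y) (u y) x|
      ≤ (|pd1 N (u y) y| * |u' y| + |pd2 N (u y) y|) * |x - y| + |N (u y) y| := by
        refine (abs_add_le _ _).trans ?_
        rw [abs_mul]
        gcongr
        exact (abs_add_le _ _).trans_eq (by rw [abs_mul])
    _ ≤ _ := by
        rw [abs_of_nonneg hp0, abs_of_nonneg hxy]
        gcongr
        · linarith [hx.2]
        · exact hy.1

theorem u'_right_le_exp (S : RightScheme N a b c ub h u u' u'' X X' X'') (hac : a < c)
    (hcb : c < b) (hub : 0 < ub)
    (hK : ∀ v ∈ Icc 0 ub, ∀ x ∈ Icc a b, |N v x| ≤ K ∧ |pd1 N v x| ≤ K ∧ |pd2 N v x| ≤ K) :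
    u' c ≤ u' a * Real.exp (((K * (ub / (b - c)) + K) * (b - a) + K + 1) * (b - a)) := by
  have hK0 : 0 ≤ K := (abs_nonneg _).trans
    (hK 0 ⟨le_rfl, hub.le⟩ a ⟨le_rfl, (hac.trans hcb).le⟩).1
  have ha' := S.u'_left_nonneg
  have hA : 0 ≤ (K * (ub / (b - c)) + K) * (b - a) + K := by
    have : 0 < b - c := by linarith
    have : 0 < b - a := by linarith
    positivity
  set A := (K * (ub / (b - c)) + K) * (b - a) + K with hAdef
  have h1 := norm_le_gronwallBound_of_norm_deriv_right_le (f := fun x => (u x, u' x))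
    (f' := fun x => (u' x, u'' x)) (δ := u' a) (K := A + 1) (ε := 0) (S.cont_u.prodMk S.cont_u')
    (fun x hx => (S.rightDeriv_u hx).prodMk (S.deriv_u' x hx))
    (by simp [S.u_left, Prod.norm_mk, abs_of_nonneg ha', ha'])
    (fun x hx => by
      have h3 := S.abs_u''_le hac hcb hub hK hx
      rw [← hAdef] at h3
      simp only [Prod.norm_mk, Real.norm_eq_abs, add_zero]
      have hl := le_max_left |u x| |u' x|
      have hr := le_max_right |u x| |u' x|
      have h0 : 0 ≤ max |u x| |u' x| := (abs_nonneg _).trans hl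
      refine max_le ?_ ?_
      · nlinarith
      · nlinarith [mul_le_mul_of_nonneg_left hl hA]) c ⟨hac.le, le_rfl⟩
  rw [gronwallBound_ε0, Prod.norm_mk] at h1
  calc u' c ≤ |u' c| := le_abs_self _
    _ ≤ _ := (le_max_right _ _).trans h1
    _ ≤ _ := by gcongr

theorem abs_betaC_le (S : RightScheme N a b c ub h u u' u'' X X' X'')
    (hN : Differentiable ℝ (Function.uncurry N)) (hac : a < c) (hub : 0 < ub)
    (hK : ∀ v ∈ Icc 0 ub, ∀ x ∈ Icc a b, |N v x| ≤ K ∧ |pd1 N v x| ≤ K ∧ |pd2 N v x| ≤ K)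
    {v w : ℝ} (hv : v ∈ Ico (u c) ub) (hw : w ∈ Icc (u c) v) :
    |betaC N w (X' w) (X w) v| ≤ (K * ub + K + K * (b - a) + K) * v := by
  have hwc : w ∈ Icc (u c) ub := ⟨hw.1, hw.2.trans hv.2.le⟩
  have hw0 : 0 ≤ w := S.u_right_pos.le.trans hw.1
  obtain ⟨k0, k1, k2⟩ := hK w ⟨hw0, hwc.2⟩ (X w) ⟨hac.le.trans (S.X_mem hwc).1, (S.X_mem hwc).2⟩
  have hK0 : 0 ≤ K := (abs_nonneg _).trans k0
  have hp := S.X'_pos w hwc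
  have hR := S.mul_X'_le hac.le hwc
  have hvw : 0 ≤ v - w := sub_nonneg.2 hw.2
  have e1 : |pd1 (Ncal N) w (X w)| ≤ K * ub + K := by
    rw [pd1_Ncal hN]
    refine (abs_add_le _ _).trans ?_
    rw [abs_mul, abs_of_nonneg hw0]
    gcongr
    exact hwc.2
  have e2 : |pd2 (Ncal N) w (X w) * X' w| ≤ K * (b - a) := by
    rw [pd2_Ncal, mul_assoc, abs_mul, abs_of_nonneg (mul_nonneg hw0 hp.le)]
    gcongr
  have e3 : |Ncal N w (X w)| ≤ K * v := by
    rw [Ncal, abs_mul, abs_of_nonneg hw0]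
    gcongr
    exact hw.2
  have hba : 0 ≤ b - a := (mul_nonneg hw0 hp.le).trans hR
  calc |betaC N w (X' w) (X w) v|
      ≤ (|pd1 (Ncal N) w (X w)| + |pd2 (Ncal N) w (X w) * X' w|) * |v - w|
          + |Ncal N w (X w)| := by
        refine (abs_sub _ _).trans ?_
        rw [abs_mul, abs_neg]
        gcongr
        exact abs_add_le _ _
    _ ≤ (K * ub + K + K * (b - a)) * v + K * v := by
        rw [abs_of_nonneg hvw]
        gcongr
        linarith
    _ = _ := by ring

/-- Exponential growth bound for `v + 1 / X'` along the inverse scheme. -/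
theorem add_inv_le_exp (S : RightScheme N a b c ub h u u' u'' X X' X'')
    (hN : Differentiable ℝ (Function.uncurry N)) (hac : a < c) (hub : 0 < ub)
    (hK : ∀ v ∈ Icc 0 ub, ∀ x ∈ Icc a b, |N v x| ≤ K ∧ |pd1 N v x| ≤ K ∧ |pd2 N v x| ≤ K)
    {A : ℝ} (hA : 1 ≤ A) (hA' : K * ub + K + K * (b - a) + K ≤ A) :
    ub + (X' ub)⁻¹ ≤ u' c * (1 + (c - a)) * Real.exp (A * (b - c)) := by
  have hlt := S.u_right_lt
  have hanti : AntitoneOn (fun v => (v + (X' v)⁻¹) * Real.exp (-(A * X v))) (Icc (u c) ub) := by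
    refine antitoneOn_of_rightDeriv_nonpos (f' := fun v =>
      (1 + -X'' v / (X' v) ^ 2) * Real.exp (-(A * X v))
        + (v + (X' v)⁻¹) * (Real.exp (-(A * X v)) * -(A * X' v)))
      ?_ (fun v hv => ?_) (fun v hv => ?_)
    · exact (continuousOn_id.add (S.cont_X'.inv₀ fun v hv => (S.X'_pos v hv).ne')).mul
        (Real.continuous_exp.comp_continuousOn (S.cont_X.const_smul A).neg)
    · have hp := S.X'_pos v ⟨hv.1, hv.2.le⟩
      exact ((hasDerivWithinAt_id v (Ici v)).fun_add ((S.deriv_X' v hv).fun_inv hp.ne')).fun_mul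
        ((S.rightDeriv_X hv).const_mul A).fun_neg.exp
    · have hp := S.X'_pos v ⟨hv.1, hv.2.le⟩
      obtain ⟨w, hw, -, he⟩ := S.X''_eq v hv
      have hβ := (abs_le.1 (S.abs_betaC_le hN hac hub hK hv hw)).1
      have hv0 : 0 < v := S.u_right_pos.trans_le hv.1
      have : (1 + -X'' v / (X' v) ^ 2) * Real.exp (-(A * X v))
          + (v + (X' v)⁻¹) * (Real.exp (-(A * X v)) * -(A * X' v))
          = Real.exp (-(A * X v)) *
            ((1 - A) - (betaC N w (X' w) (X w) v + A * v) * X' v) := by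
        rw [he]; field_simp; ring
      rw [this]
      refine mul_nonpos_of_nonneg_of_nonpos (Real.exp_pos _).le ?_
      have : 0 ≤ betaC N w (X' w) (X w) v + A * v := by nlinarith
      nlinarith [mul_nonneg this hp.le]
  have h1 := hanti ⟨le_rfl, hlt.le⟩ ⟨hlt.le, le_rfl⟩ hlt.le
  simp only [S.X_left, S.X_right, S.X'_left, one_div, inv_inv] at h1
  have h2 : (ub + (X' ub)⁻¹) ≤ (u c + u' c) * Real.exp (A * (b - c)) := by
    have h3 := mul_le_mul_of_nonneg_right h1 (Real.exp_pos (A * b)).le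
    rw [mul_assoc, mul_assoc, ← Real.exp_add, ← Real.exp_add] at h3
    simpa [show -(A * c) + A * b = A * (b - c) by ring] using h3
  refine h2.trans (mul_le_mul_of_nonneg_right ?_ (Real.exp_pos _).le)
  linarith [S.u_right_le hac.le]


theorem exists_uniform_bounds (hN : ContDiff ℝ 2 (Function.uncurry N)) (hac : a < c) (hcb : c < b)
    (hub : 0 < ub) :
    ∃ m M : ℝ, 0 < m ∧ 0 < M ∧ ∀ (h : ℝ) (u u' u'' X X' X'' : ℝ → ℝ),
      RightScheme N a b c ub h u u' u'' X X' X'' →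
      (∀ x ∈ Icc a c, m ≤ u' x ∧ u' x ≤ M) ∧ (∀ x ∈ Ico a c, |u'' x| ≤ M) ∧
      (∀ v ∈ Icc (u c) ub, m ≤ X' v ∧ X' v ≤ M) ∧ (∀ v ∈ Ico (u c) ub, |X'' v| ≤ M) := by
  have hbox := (isCompact_Icc (a := (0 : ℝ)) (b := ub)).prod (isCompact_Icc (a := a) (b := b))
  obtain ⟨K₀, hK₀, k₀⟩ := exists_bound_of_continuous hN.continuous hbox
  obtain ⟨K₁, hK₁, k₁⟩ := exists_bound_of_continuous (continuous_pd1 hN) hbox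
  obtain ⟨K₂, hK₂, k₂⟩ := exists_bound_of_continuous (continuous_pd2 hN) hbox
  set K := K₀ + K₁ + K₂ with hKdef
  have hKpos : 0 < K := by positivity
  have hK : ∀ v ∈ Icc 0 ub, ∀ x ∈ Icc a b,
      |N v x| ≤ K ∧ |pd1 N v x| ≤ K ∧ |pd2 N v x| ≤ K := fun v hv x hx =>
    ⟨(k₀ (v, x) ⟨hv, hx⟩).trans (by linarith), (k₁ (v, x) ⟨hv, hx⟩).trans (by linarith),
      (k₂ (v, x) ⟨hv, hx⟩).trans (by linarith)⟩
  have hba : 0 < b - a := by linarith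
  have hbc : 0 < b - c := by linarith
  have hca : 0 < c - a := by linarith
  set Q := ub / (b - c) with hQ
  have hQpos : 0 < Q := by positivity
  set A := (K * Q + K) * (b - a) + K with hA
  have hApos : 0 < A := by positivity
  set E := Real.exp ((A + 1) * (b - a)) with hE
  have hEpos : 0 < E := Real.exp_pos _
  set B := K * ub + K + K * (b - a) + K with hB
  have hBpos : 0 < B := by positivity
  set G := (1 + (c - a)) * Real.exp ((B + 1) * (b - c)) with hG
  have hGpos : 0 < G := by positivity
  refine ⟨min (ub / (G * E)) (1 / (Q * G)), Q + A * ub + G / ub + B * ub * (G / ub) ^ 3,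
    by positivity, by positivity, fun h u u' u'' X X' X'' S => ?_⟩
  have hQc : u' c ≤ Q := by
    rw [hQ, le_div_iff₀ hbc]; exact S.u'_right_mul_le
  have hgrow := S.add_inv_le_exp (hN.differentiable (by norm_num)) hac hub hK
    (A := B + 1) (by linarith) (by linarith)
  rw [mul_assoc, ← hG] at hgrow
  have hXub : 0 < X' ub := S.X'_pos ub ⟨S.u_right_lt.le, le_rfl⟩
  have hlow : ub ≤ u' c * G := by linarith [inv_pos.2 hXub]
  have hexp : u' c ≤ u' a * E := S.u'_right_le_exp hac hcb hub hK
  have hu'a : ub / (G * E) ≤ u' a := by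
    rw [div_le_iff₀ (by positivity)]
    nlinarith
  have hX's : X' (u c) ≤ G / ub := by
    rw [S.X'_left, div_le_div_iff₀ S.u'_right_pos hub]
    linarith
  have hXlow : 1 / (Q * G) ≤ X' ub := by
    rw [one_div]
    refine inv_le_of_inv_le₀ hXub ?_
    nlinarith
  have hX'le : ∀ v ∈ Icc (u c) ub, X' v ≤ G / ub := fun v hv =>
    (S.X'_antitoneOn ⟨le_rfl, S.u_right_lt.le⟩ hv hv.1).trans hX's
  have t1 : 0 < A * ub := by positivity
  have t2 : 0 < G / ub := by positivity
  have t3 : 0 < B * ub * (G / ub) ^ 3 := by positivity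
  refine ⟨fun x hx => ⟨?_, ?_⟩, fun x hx => ?_, fun v hv => ⟨?_, ?_⟩, fun v hv => ?_⟩
  · exact (min_le_left _ _).trans (hu'a.trans (S.u'_monotoneOn ⟨le_rfl, hac.le⟩ hx hx.1))
  · linarith [S.u'_monotoneOn hx ⟨hac.le, le_rfl⟩ hx.2]
  · have h1 := S.abs_u''_le hac hcb hub hK hx
    have h2 := S.u_mem x ⟨hx.1, hx.2.le⟩
    rw [← hQ, ← hA, abs_of_nonneg h2.1] at h1
    linarith [mul_le_mul_of_nonneg_left h2.2 hApos.le]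
  · exact (min_le_right _ _).trans (hXlow.trans (S.X'_antitoneOn hv ⟨S.u_right_lt.le, le_rfl⟩ hv.2))
  · linarith [hX'le v hv]
  · obtain ⟨w, hw, -, he⟩ := S.X''_eq v hv
    have hβ := S.abs_betaC_le (hN.differentiable (by norm_num)) hac hub hK hv hw
    rw [← hB] at hβ
    have hp := S.X'_pos v ⟨hv.1, hv.2.le⟩
    have h3 : |X'' v| ≤ B * ub * (G / ub) ^ 3 := by
      rw [he, abs_mul, abs_of_pos (pow_pos hp 3)]
      have hβ' : |betaC N w (X' w) (X w) v| ≤ B * ub :=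
        hβ.trans (mul_le_mul_of_nonneg_left hv.2.le hBpos.le)
      have := hX'le v ⟨hv.1, hv.2.le⟩
      gcongr
    linarith

end RightScheme

/-! ### Consistency of the schemes -/

theorem abs_sub_linear_le {R d₁ d₂ p δ ζ C K M : ℝ} (hC : 0 ≤ C)
    (hR : |R - d₁ * δ - d₂ * ζ| ≤ C * (|δ| + |ζ|) ^ 2) (hζ : |ζ| ≤ M * |δ|)
    (hζp : |ζ - p * δ| ≤ M * δ ^ 2) (hd : |d₂| ≤ K) :
    |R - (d₁ + d₂ * p) * δ| ≤ (C * (1 + M) ^ 2 + K * M) * δ ^ 2 := by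
  have h1 : C * (|δ| + |ζ|) ^ 2 ≤ C * (1 + M) ^ 2 * δ ^ 2 := by
    calc C * (|δ| + |ζ|) ^ 2 ≤ C * (|δ| + M * |δ|) ^ 2 := by gcongr
      _ = C * (1 + M) ^ 2 * |δ| ^ 2 := by ring
      _ = _ := by rw [sq_abs]
  have h2 : |d₂ * (ζ - p * δ)| ≤ K * (M * δ ^ 2) := by
    rw [abs_mul]
    have : 0 ≤ K := (abs_nonneg _).trans hd
    gcongr
  calc |R - (d₁ + d₂ * p) * δ| = |(R - d₁ * δ - d₂ * ζ) + d₂ * (ζ - p * δ)| := by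
        congr 1; ring
    _ ≤ _ := abs_add_le _ _
    _ ≤ C * (1 + M) ^ 2 * δ ^ 2 + K * (M * δ ^ 2) := by linarith
    _ = _ := by ring

/-- Increment estimates for a function on `[a, b]` with bounded first and second (right)
derivatives. -/
theorem abs_increment_le_of_rightDeriv {f f' f'' : ℝ → ℝ} {a b y x M : ℝ} (hM : 0 ≤ M)
    (hf : ContinuousOn f (Icc a b)) (hf' : ∀ x ∈ Ico a b, HasDerivWithinAt f (f' x) (Ici x) x)
    (hcf' : ContinuousOn f' (Icc a b))
    (hf'' : ∀ x ∈ Ico a b, HasDerivWithinAt f' (f'' x) (Ici x) x)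
    (b1 : ∀ x ∈ Icc a b, |f' x| ≤ M) (b2 : ∀ x ∈ Ico a b, |f'' x| ≤ M)
    (hay : a ≤ y) (hyx : y ≤ x) (hxb : x ≤ b) :
    |f x - f y| ≤ M * |x - y| ∧ |f x - f y - f' y * (x - y)| ≤ M * (x - y) ^ 2 := by
  have hsub : Icc y x ⊆ Icc a b := Icc_subset_Icc hay hxb
  have hsub' : Ico y x ⊆ Ico a b := Ico_subset_Ico hay hxb
  refine ⟨?_, abs_taylor_one_le_of_rightDeriv hyx hM (hf.mono hsub)
    (fun t ht => hf' t (hsub' ht)) (hcf'.mono hsub) (fun t ht => hf'' t (hsub' ht))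
    (fun t ht => b2 t (hsub' ht))⟩
  rw [abs_of_nonneg (sub_nonneg.2 hyx)]
  exact norm_image_sub_le_of_norm_deriv_right_le_segment (hf.mono hsub)
    (fun t ht => hf' t (hsub' ht)) (fun t ht => b1 t (Ico_subset_Icc_self (hsub' ht)))
    x ⟨hyx, le_rfl⟩

theorem RightScheme.exists_consistency {N : ℝ → ℝ → ℝ} {a b c ub M : ℝ}
    (hN : ContDiff ℝ 2 (Function.uncurry N)) (hac : a < c) (hcb : c < b) (hub : 0 < ub)
    (hM : 0 < M) :
    ∃ C : ℝ, 0 < C ∧ ∀ (h : ℝ) (u u' u'' X X' X'' : ℝ → ℝ),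
      RightScheme N a b c ub h u u' u'' X X' X'' →
      (∀ x ∈ Icc a c, |u' x| ≤ M) → (∀ x ∈ Ico a c, |u'' x| ≤ M) →
      (∀ v ∈ Icc (u c) ub, |X' v| ≤ M) → (∀ v ∈ Ico (u c) ub, |X'' v| ≤ M) →
      (∀ x ∈ Ico a c, |u'' x - Ncal N (u x) x| ≤ C * h ^ 2) ∧
      (∀ v ∈ Ico (u c) ub, |X'' v + Ncal N v (X v) * (X' v) ^ 3| ≤ C * h ^ 2) := by
  have hbox := (isCompact_Icc (a := (0 : ℝ)) (b := ub)).prod (isCompact_Icc (a := a) (b := b))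
  obtain ⟨K₁, hK₁, k₁⟩ := exists_bound_of_continuous (continuous_pd1 hN) hbox
  obtain ⟨K₂, hK₂, k₂⟩ := exists_bound_of_continuous (continuous_pd2 (contDiff_Ncal hN)) hbox
  obtain ⟨C₁, hC₁, t₁⟩ := exists_taylor_two_bound hN 0 ub a b
  obtain ⟨C₂, hC₂, t₂⟩ := exists_taylor_two_bound (contDiff_Ncal hN) 0 ub a b
  refine ⟨(C₁ * (1 + M) ^ 2 + K₁ * M) * ub + (C₂ * (1 + M) ^ 2 + K₂ * M) * M ^ 3, by positivity,
    fun h u u' u'' X X' X'' S bu bu2 bX bX2 => ⟨fun x hx => ?_, fun v hv => ?_⟩⟩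
  · obtain ⟨y, hy, hh, he⟩ := S.u''_eq x hx
    have hyc : y ∈ Icc a c := ⟨hy.1, hy.2.trans hx.2.le⟩
    have hxc : x ∈ Icc a c := ⟨hx.1, hx.2.le⟩
    have hyb : y ∈ Icc a b := ⟨hy.1, hyc.2.trans hcb.le⟩
    have hxb : x ∈ Icc a b := ⟨hx.1, hxc.2.trans hcb.le⟩
    obtain ⟨i1, i2⟩ := abs_increment_le_of_rightDeriv hM.le S.cont_u (fun x hx => S.rightDeriv_u hx)
      S.cont_u' S.deriv_u' bu bu2 hy.1 hy.2 hxc.2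
    have ht := t₁ (u y) (S.u_mem y hyc) y hyb (u x) (S.u_mem x hxc) x hxb
    have hfin := abs_sub_linear_le (R := N (u x) x - N (u y) y) (d₁ := pd2 N (u y) y)
      (d₂ := pd1 N (u y) y) hC₁.le
      (by rw [sub_right_comm, add_comm |x - y|]; exact ht) i1 i2
      (k₁ (u y, y) ⟨S.u_mem y hyc, hyb⟩)
    have hsq : (x - y) ^ 2 ≤ h ^ 2 := by
      have := sub_nonneg.2 hy.2
      gcongr
    have hux := S.u_mem x hxc
    calc |u'' x - Ncal N (u x) x|
        = |N (u x) x - N (u y) y - (pd2 N (u y) y + pd1 N (u y) y * u' y) * (x - y)| * u x := by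
          rw [he, alphaC, Ncal, ← abs_of_nonneg hux.1, ← abs_mul, abs_of_nonneg hux.1,
            ← abs_neg]
          congr 1; ring
      _ ≤ (C₁ * (1 + M) ^ 2 + K₁ * M) * h ^ 2 * ub := by
          refine mul_le_mul (hfin.trans ?_) hux.2 hux.1 (by positivity)
          gcongr
      _ ≤ _ := by
          have : 0 ≤ (C₂ * (1 + M) ^ 2 + K₂ * M) * M ^ 3 * h ^ 2 := by positivity
          linarith
  · obtain ⟨w, hw, hh, he⟩ := S.X''_eq v hv
    have hwc : w ∈ Icc (u c) ub := ⟨hw.1, hw.2.trans hv.2.le⟩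
    have hvc : v ∈ Icc (u c) ub := ⟨hv.1, hv.2.le⟩
    have hw0 : w ∈ Icc 0 ub := ⟨S.u_right_pos.le.trans hwc.1, hwc.2⟩
    have hv0 : v ∈ Icc 0 ub := ⟨S.u_right_pos.le.trans hvc.1, hvc.2⟩
    have hXw : X w ∈ Icc a b := Icc_subset_Icc_left hac.le (S.X_mem hwc)
    have hXv : X v ∈ Icc a b := Icc_subset_Icc_left hac.le (S.X_mem hvc)
    obtain ⟨i1, i2⟩ := abs_increment_le_of_rightDeriv hM.le S.cont_X (fun x hx => S.rightDeriv_X hx)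
      S.cont_X' S.deriv_X' bX bX2 hw.1 hw.2 hvc.2
    have hfin := abs_sub_linear_le hC₂.le (t₂ w hw0 (X w) hXw v hv0 (X v) hXv) i1 i2
      (k₂ (w, X w) ⟨hw0, hXw⟩)
    have hsq : (v - w) ^ 2 ≤ h ^ 2 := by
      have := sub_nonneg.2 hw.2
      gcongr
    have hX3 : |X' v| ^ 3 ≤ M ^ 3 := pow_le_pow_left₀ (abs_nonneg _) (bX v hvc) 3
    calc |X'' v + Ncal N v (X v) * (X' v) ^ 3|
        = |Ncal N v (X v) - Ncal N w (X w) -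
            (pd1 (Ncal N) w (X w) + pd2 (Ncal N) w (X w) * X' w) * (v - w)| * |X' v| ^ 3 := by
          rw [he, betaC, ← abs_pow, ← abs_mul]
          congr 1; ring
      _ ≤ (C₂ * (1 + M) ^ 2 + K₂ * M) * h ^ 2 * M ^ 3 := by
          refine mul_le_mul (hfin.trans ?_) hX3 (by positivity) (by positivity)
          gcongr
      _ ≤ _ := by
          have : 0 ≤ (C₁ * (1 + M) ^ 2 + K₁ * M) * ub * h ^ 2 := by positivity
          linarith

/-! ### The truncated inverse equation -/

/-- The nearest point of `[l, r]` to `x`. -/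
def clampTo (l r x : ℝ) : ℝ := max l (min r x)

theorem clampTo_mem {l r : ℝ} (h : l ≤ r) (x : ℝ) : clampTo l r x ∈ Icc l r :=
  ⟨le_max_left _ _, max_le h (min_le_left _ _)⟩

theorem clampTo_of_mem {l r x : ℝ} (h : x ∈ Icc l r) : clampTo l r x = x := by
  rw [clampTo, min_eq_right h.2, max_eq_right h.1]

theorem abs_clampTo_sub_le (l r x y : ℝ) : |clampTo l r x - clampTo l r y| ≤ |x - y| := by
  refine (abs_max_sub_max_le_max _ _ _ _).trans ?_
  rw [sub_self, abs_zero, max_eq_right (abs_nonneg _)]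
  refine (abs_min_sub_min_le_max _ _ _ _).trans ?_
  rw [sub_self, abs_zero, max_eq_right (abs_nonneg _)]

/-- The first-order system `x' = p`, `p' = -𝒩(v, x) p³`, with `x` truncated to `[xl, xr]` and `p`
truncated to `[pl, pr]`. -/
def clampField (N : ℝ → ℝ → ℝ) (pl pr xl xr v : ℝ) (y : ℝ × ℝ) : ℝ × ℝ :=
  (clampTo pl pr y.2, -(Ncal N v (clampTo xl xr y.1)) * (clampTo pl pr y.2) ^ 3)

theorem clampField_of_mem {N : ℝ → ℝ → ℝ} {pl pr xl xr v x p : ℝ} (hx : x ∈ Icc xl xr)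
    (hp : p ∈ Icc pl pr) : clampField N pl pr xl xr v (x, p) = (p, -(Ncal N v x) * p ^ 3) := by
  simp only [clampField, clampTo_of_mem hx, clampTo_of_mem hp]

theorem continuous_clampField {N : ℝ → ℝ → ℝ} (hN : Continuous (Function.uncurry N))
    (pl pr xl xr : ℝ) (y : ℝ × ℝ) : Continuous fun v => clampField N pl pr xl xr v y := by
  have h : Continuous fun v => N v (clampTo xl xr y.1) :=
    hN.comp (continuous_id.prodMk continuous_const)
  unfold clampField Ncal
  fun_prop

theorem exists_clampField_bounds {N : ℝ → ℝ → ℝ} (hN : ContDiff ℝ 2 (Function.uncurry N))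
    {pl pr xl xr : ℝ} (hp : pl ≤ pr) (hx : xl ≤ xr) (ub : ℝ) :
    ∃ L B : ℝ, 0 < L ∧ 0 < B ∧ ∀ v ∈ Icc 0 ub, ∀ y : ℝ × ℝ,
      ‖clampField N pl pr xl xr v y‖ ≤ B ∧ ∀ z : ℝ × ℝ,
        ‖clampField N pl pr xl xr v y - clampField N pl pr xl xr v z‖ ≤ L * ‖y - z‖ := by
  let G : ℝ × ℝ × ℝ → ℝ × ℝ := fun q => (q.2.2, -(Ncal N q.1 q.2.1) * q.2.2 ^ 3)
  have hG : ContDiff ℝ 1 G := by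
    have h1 : ContDiff ℝ 1 fun q : ℝ × ℝ × ℝ => Ncal N q.1 q.2.1 :=
      ((contDiff_Ncal hN).of_le (by norm_num)).comp
        (contDiff_fst.prodMk (contDiff_fst.comp contDiff_snd))
    have h2 : ContDiff ℝ 1 fun q : ℝ × ℝ × ℝ => q.2.2 := contDiff_snd.comp contDiff_snd
    exact h2.prodMk (h1.neg.mul (h2.pow 3))
  have hbox := (isCompact_Icc (a := (0 : ℝ)) (b := ub)).prod
    ((isCompact_Icc (a := xl) (b := xr)).prod (isCompact_Icc (a := pl) (b := pr)))
  obtain ⟨L, hL, hLip⟩ := hG.exists_lipschitz_of_isCompact hbox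
  obtain ⟨B, hB, hbd⟩ := exists_bound_of_continuous hG.continuous hbox
  have hmem : ∀ v ∈ Icc 0 ub, ∀ y : ℝ × ℝ, (v, clampTo xl xr y.1, clampTo pl pr y.2) ∈
      Icc 0 ub ×ˢ (Icc xl xr ×ˢ Icc pl pr) :=
    fun v hv y => ⟨hv, clampTo_mem hx _, clampTo_mem hp _⟩
  refine ⟨L, B, hL, hB, fun v hv y => ⟨hbd _ (hmem v hv y), fun z => ?_⟩⟩
  refine (hLip _ (hmem v hv y) _ (hmem v hv z)).trans (mul_le_mul_of_nonneg_left ?_ hL.le)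
  simp only [Prod.mk_sub_mk, sub_self, Prod.norm_def, norm_zero, Real.norm_eq_abs,
    Prod.fst_sub, Prod.snd_sub]
  exact max_le ((abs_nonneg _).trans (le_max_left _ _))
    (max_le_max (abs_clampTo_sub_le _ _ _ _) (abs_clampTo_sub_le _ _ _ _))

/-- Global existence for a bounded, globally Lipschitz vector field. -/
theorem exists_solution_of_lipschitz_of_bounded {F : ℝ → ℝ × ℝ → ℝ × ℝ} {T L B : ℝ} (hT : 0 ≤ T)
    (hL : 0 ≤ L) (hB : 0 ≤ B) (hLip : ∀ v ∈ Icc 0 T, ∀ y z, ‖F v y - F v z‖ ≤ L * ‖y - z‖)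
    (hbd : ∀ v ∈ Icc 0 T, ∀ y, ‖F v y‖ ≤ B) (hcont : ∀ y, Continuous fun v => F v y)
    (y₀ : ℝ × ℝ) :
    ∃ y : ℝ → ℝ × ℝ, y 0 = y₀ ∧ ∀ v ∈ Icc 0 T, HasDerivWithinAt y (F v (y v)) (Icc 0 T) v := by
  have h : IsPicardLindelof F (tmin := 0) (tmax := T) ⟨0, le_rfl, hT⟩ y₀ (B * T).toNNReal 0
      B.toNNReal L.toNNReal :=
    { lipschitzOnWith := fun v hv => LipschitzOnWith.of_dist_le_mul fun y _ z _ => by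
        rw [dist_eq_norm, dist_eq_norm, Real.coe_toNNReal _ hL]; exact hLip v hv y z
      continuousOn := fun y _ => (hcont y).continuousOn
      norm_le := fun v hv y _ => by rw [Real.coe_toNNReal _ hB]; exact hbd v hv y
      mul_max_le := by
        rw [Real.coe_toNNReal _ hB, Real.coe_toNNReal _ (mul_nonneg hB hT)]
        simp [hT] }
  exact h.exists_eq_forall_mem_Icc_hasDerivWithinAt₀

/-! ### Error propagation -/

namespace RightScheme

variable {N : ℝ → ℝ → ℝ} {a b c ub h : ℝ} {u u' u'' X X' X'' : ℝ → ℝ}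
  {m M L E pl pr xl xr : ℝ} {y : ℝ → ℝ × ℝ}

theorem norm_sub_le_on_straight (S : RightScheme N a b c ub h u u' u'' X X' X'')
    (hcb : c < b) (hm : 0 < m) (hM : 0 < M) (hL : 0 < L) (hE : 0 ≤ E)
    (bu : ∀ x ∈ Icc a c, m ≤ u' x ∧ u' x ≤ M)
    (hp : ∀ x ∈ Icc a c, (u' x)⁻¹ ∈ Icc pl pr) (hx : Icc a b ⊆ Icc xl xr)
    (hLip : ∀ v ∈ Icc 0 ub, ∀ y z,
      ‖clampField N pl pr xl xr v y - clampField N pl pr xl xr v z‖ ≤ L * ‖y - z‖)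
    (herr : ∀ x ∈ Ico a c, |u'' x - Ncal N (u x) x| ≤ E)
    (hy0 : y 0 = (a, 1 / u' a))
    (hy : ∀ v ∈ Icc 0 ub, HasDerivWithinAt y (clampField N pl pr xl xr v (y v)) (Icc 0 ub) v) :
    ∀ x ∈ Icc a c, ‖y (u x) - (x, (u' x)⁻¹)‖ ≤
      E / m ^ 2 / (M * L) * Real.exp (M * L * (b - a)) := by
  intro x hxm
  have hder : ∀ x ∈ Icc a c, HasDerivWithinAt (fun x => y (u x))
      (u' x • clampField N pl pr xl xr (u x) (y (u x))) (Icc a c) x := fun x hx =>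
    (hy (u x) (S.u_mem x hx)).scomp x (S.deriv_u x hx) S.u_mem
  have hML : 0 < M * L := mul_pos hM hL
  have hg := dist_le_of_approx_trajectories_ODE_of_mem (K := (M * L).toNNReal)
    (v := fun t z => u' t • clampField N pl pr xl xr (u t) z) (s := fun _ => univ)
    (f := fun x => y (u x)) (f' := fun x => u' x • clampField N pl pr xl xr (u x) (y (u x)))
    (g := fun x => (x, (u' x)⁻¹)) (g' := fun x => (1, -u'' x / (u' x) ^ 2))
    (εf := 0) (εg := E / m ^ 2) (δ := 0) (a := a) (b := c) ?_
    (fun x hx => (hder x hx).continuousWithinAt) ?_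
    (fun t _ => (dist_self _).le) (fun _ _ => mem_univ _)
    (continuousOn_id.prodMk (S.cont_u'.inv₀ fun x hx => (hm.trans_le (bu x hx).1).ne'))
    ?_ ?_ (fun _ _ => mem_univ _) ?_ x hxm
  · rw [dist_eq_norm, zero_add, Real.coe_toNNReal _ hML.le] at hg
    refine hg.trans ((gronwallBound_le_of_pos (T := b - a) le_rfl hML (by positivity)
      (by linarith [hxm.2])).trans_eq (by rw [zero_add]))
  · intro t ht
    have htc : t ∈ Icc a c := ⟨ht.1, ht.2.le⟩
    refine LipschitzOnWith.of_dist_le_mul fun w _ z _ => ?_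
    rw [dist_eq_norm, dist_eq_norm, Real.coe_toNNReal _ hML.le, ← smul_sub, norm_smul,
      Real.norm_eq_abs, abs_of_pos (hm.trans_le (bu t htc).1), mul_assoc]
    exact mul_le_mul (bu t htc).2 (hLip _ (S.u_mem t htc) w z) (norm_nonneg _) hM.le
  · intro t ht
    exact ((hder t ⟨ht.1, ht.2.le⟩).mono (Icc_subset_Icc_left ht.1)).mono_of_mem_nhdsWithin
      (Icc_mem_nhdsGE ht.2)
  · intro t ht
    exact (hasDerivWithinAt_id t (Ici t)).prodMk
      ((S.deriv_u' t ht).fun_inv (hm.trans_le (bu t ⟨ht.1, ht.2.le⟩).1).ne')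
  · intro t ht
    have htc : t ∈ Icc a c := ⟨ht.1, ht.2.le⟩
    have hpos : 0 < u' t := hm.trans_le (bu t htc).1
    rw [clampField_of_mem (hx ⟨htc.1, htc.2.trans hcb.le⟩) (hp t htc), dist_eq_norm]
    have h1 : (1, -u'' t / (u' t) ^ 2) - u' t • ((u' t)⁻¹, -(Ncal N (u t) t) * (u' t)⁻¹ ^ 3)
        = ((0 : ℝ), -((u'' t - Ncal N (u t) t) / (u' t) ^ 2)) := by
      ext
      · simp [hpos.ne']
      · simp only [Prod.smul_mk, Prod.mk_sub_mk, smul_eq_mul]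
        field_simp
        ring
    rw [h1, Prod.norm_mk, norm_zero, norm_neg, max_eq_right (norm_nonneg _), Real.norm_eq_abs,
      abs_div, abs_of_pos (pow_pos hpos 2)]
    have := (bu t htc).1
    have := herr t ht
    gcongr
  · simp [S.u_left, hy0]

theorem norm_sub_le_on_inverse (S : RightScheme N a b c ub h u u' u'' X X' X'')
    (hac : a < c) (hL : 0 < L) (hE : 0 ≤ E) {δ : ℝ} (hδ : 0 ≤ δ)
    (hp : ∀ v ∈ Icc (u c) ub, X' v ∈ Icc pl pr) (hx : Icc a b ⊆ Icc xl xr)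
    (hLip : ∀ v ∈ Icc 0 ub, ∀ y z,
      ‖clampField N pl pr xl xr v y - clampField N pl pr xl xr v z‖ ≤ L * ‖y - z‖)
    (herr : ∀ v ∈ Ico (u c) ub, |X'' v + Ncal N v (X v) * (X' v) ^ 3| ≤ E)
    (hy : ∀ v ∈ Icc 0 ub, HasDerivWithinAt y (clampField N pl pr xl xr v (y v)) (Icc 0 ub) v)
    (hyc : ‖y (u c) - (c, (u' c)⁻¹)‖ ≤ δ) :
    ∀ v ∈ Icc (u c) ub, ‖y v - (X v, X' v)‖ ≤ (δ + E / L) * Real.exp (L * ub) := by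
  intro v hv
  have h0 := S.u_right_pos
  have hg := dist_le_of_approx_trajectories_ODE_of_mem (K := L.toNNReal)
    (v := clampField N pl pr xl xr) (s := fun _ => univ)
    (f := y) (f' := fun v => clampField N pl pr xl xr v (y v))
    (g := fun v => (X v, X' v)) (g' := fun v => (X' v, X'' v))
    (εf := 0) (εg := E) (δ := δ) (a := u c) (b := ub) ?_
    (fun v hv => ((hy v ⟨h0.le.trans hv.1, hv.2⟩).continuousWithinAt).mono
      (Icc_subset_Icc_left h0.le)) ?_
    (fun t _ => (dist_self _).le) (fun _ _ => mem_univ _)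
    (S.cont_X.prodMk S.cont_X') ?_ ?_ (fun _ _ => mem_univ _) ?_ v hv
  · rw [dist_eq_norm, zero_add, Real.coe_toNNReal _ hL.le] at hg
    exact hg.trans (gronwallBound_le_of_pos hδ hL hE (by linarith [hv.2]))
  · intro t ht
    refine LipschitzOnWith.of_dist_le_mul fun w _ z _ => ?_
    rw [dist_eq_norm, dist_eq_norm, Real.coe_toNNReal _ hL.le]
    exact hLip t ⟨h0.le.trans ht.1, ht.2.le⟩ w z
  · intro t ht
    exact ((hy t ⟨h0.le.trans ht.1, ht.2.le⟩).mono
      (Icc_subset_Icc_left (h0.le.trans ht.1))).mono_of_mem_nhdsWithin (Icc_mem_nhdsGE ht.2)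
  · intro t ht
    exact (S.rightDeriv_X ht).prodMk (S.deriv_X' t ht)
  · intro t ht
    have htc : t ∈ Icc (u c) ub := ⟨ht.1, ht.2.le⟩
    rw [clampField_of_mem (hx (Icc_subset_Icc_left hac.le (S.X_mem htc))) (hp t htc),
      dist_eq_norm, Prod.mk_sub_mk, sub_self, Prod.norm_mk, norm_zero,
      max_eq_right (norm_nonneg _), neg_mul, sub_neg_eq_add]
    exact herr t ht
  · rw [dist_eq_norm, S.X_left, S.X'_left, one_div]
    exact hyc

end RightScheme

/-! ### Inverse functions -/

theorem mul_sub_le_sub_of_le_deriv {f f' : ℝ → ℝ} {T k : ℝ}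
    (hf : ∀ v ∈ Icc 0 T, HasDerivWithinAt f (f' v) (Icc 0 T) v) (hk : ∀ v ∈ Icc 0 T, k ≤ f' v) :
    ∀ v ∈ Icc 0 T, ∀ w ∈ Icc 0 T, v ≤ w → k * (w - v) ≤ f w - f v := by
  have hint : ∀ v ∈ interior (Icc 0 T), HasDerivAt f (f' v) v := fun v hv =>
    (hf v (interior_subset hv)).hasDerivAt (mem_interior_iff_mem_nhds.1 hv)
  refine (convex_Icc 0 T).mul_sub_le_image_sub_of_le_deriv
    (fun v hv => (hf v hv).continuousWithinAt)
    (fun v hv => (hint v hv).differentiableAt.differentiableWithinAt) fun v hv => ?_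
  rw [(hint v hv).deriv]
  exact hk v (interior_subset hv)

/-- A function with derivative at least `k > 0` has a differentiable inverse with Lipschitz
constant `1 / k`. -/
theorem exists_inverse_of_le_deriv {f f' : ℝ → ℝ} {T k a c : ℝ} (hk0 : 0 < k)
    (hf : ∀ v ∈ Icc 0 T, HasDerivWithinAt f (f' v) (Icc 0 T) v) (hk : ∀ v ∈ Icc 0 T, k ≤ f' v)
    (himg : Icc a c ⊆ f '' Icc 0 T) :
    StrictMonoOn f (Icc 0 T) ∧ ∃ g : ℝ → ℝ, (∀ v ∈ Icc 0 T, g (f v) = v) ∧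
      ∀ x ∈ Icc a c, g x ∈ Icc 0 T ∧ HasDerivWithinAt g (f' (g x))⁻¹ (Icc a c) x ∧
        ∀ v ∈ Icc 0 T, |v - g x| ≤ |f v - x| / k := by
  have hexp := mul_sub_le_sub_of_le_deriv hf hk
  have hmono : StrictMonoOn f (Icc 0 T) := fun v hv w hw hvw =>
    sub_pos.1 ((mul_pos hk0 (sub_pos.2 hvw)).trans_le (hexp v hv w hw hvw.le))
  have habs : ∀ v ∈ Icc 0 T, ∀ w ∈ Icc 0 T, |v - w| ≤ |f v - f w| / k := by
    intro v hv w hw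
    rw [le_div_iff₀ hk0, mul_comm]
    rcases le_total v w with h | h
    · rw [abs_sub_comm v, abs_sub_comm (f v), abs_of_nonneg (sub_nonneg.2 h)]
      exact (hexp v hv w hw h).trans (le_abs_self _)
    · rw [abs_of_nonneg (sub_nonneg.2 h)]
      exact (hexp w hw v hv h).trans (le_abs_self _)
  have hleft : ∀ v ∈ Icc 0 T, Function.invFunOn f (Icc 0 T) (f v) = v :=
    fun v hv => hmono.injOn.leftInvOn_invFunOn hv
  generalize Function.invFunOn f (Icc 0 T) = g at hleft
  have hg : ∀ x ∈ Icc a c, g x ∈ Icc 0 T ∧ f (g x) = x := by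
    intro x hx
    obtain ⟨v, hv, rfl⟩ := himg hx
    rw [hleft v hv]
    exact ⟨hv, rfl⟩
  refine ⟨hmono, g, hleft, fun x hx => ⟨(hg x hx).1, ?_, fun v hv => ?_⟩⟩
  · have hcont : ContinuousWithinAt g (Icc a c) x := by
      refine tendsto_iff_dist_tendsto_zero.2 (squeeze_zero' (g := fun z => |z - x| / k)
        (Eventually.of_forall fun _ => dist_nonneg) ?_ ?_)
      · filter_upwards [self_mem_nhdsWithin] with z hz
        have := habs _ (hg z hz).1 _ (hg x hx).1
        rwa [(hg z hz).2, (hg x hx).2] at this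
      · have : Continuous fun z : ℝ => |z - x| / k := by fun_prop
        simpa using (this.tendsto x).mono_left nhdsWithin_le_nhds
    have hne : f' (g x) ≠ 0 := (hk0.trans_le (hk _ (hg x hx).1)).ne'
    have hfd : HasFDerivWithinAt f
        (ContinuousLinearEquiv.unitsEquivAut ℝ (Units.mk0 (f' (g x)) hne) : ℝ →L[ℝ] ℝ)
        (Icc 0 T) (g x) := hf _ (hg x hx).1
    exact HasFDerivWithinAt.of_local_left_inverse
      (tendsto_nhdsWithin_of_tendsto_nhds_of_eventually_within _ hcont
        (eventually_nhdsWithin_of_forall fun z hz => (hg z hz).1)) hfd hx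
      (eventually_nhdsWithin_of_forall fun z hz => (hg z hz).2)
  · have := habs v hv _ (hg x hx).1
    rwa [(hg x hx).2] at this

theorem abs_sub_inv_le {p q k M e : ℝ} (hk : 0 < k) (hp : 0 < p) (hpM : p ≤ M) (hq : k ≤ q)
    (h : |q - p⁻¹| ≤ e) : |p - q⁻¹| ≤ M * e / k := by
  have hq0 : 0 < q := hk.trans_le hq
  have he : 0 ≤ e := (abs_nonneg _).trans h
  have : p - q⁻¹ = p * (q - p⁻¹) / q := by field_simp
  rw [this, abs_div, abs_mul, abs_of_pos hp, abs_of_pos hq0]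
  have := hp.le.trans hpM
  gcongr

theorem abs_inv_sub_inv_le {p q k : ℝ} (hk : 0 < k) (hp : k ≤ p) (hq : k ≤ q) :
    |p⁻¹ - q⁻¹| ≤ |p - q| / k ^ 2 := by
  have hp0 : 0 < p := hk.trans_le hp
  have hq0 : 0 < q := hk.trans_le hq
  have : p⁻¹ - q⁻¹ = (q - p) / (p * q) := by field_simp
  rw [this, abs_div, abs_sub_comm, abs_of_pos (mul_pos hp0 hq0), sq]
  gcongr

theorem abs_sub_le_of_norm_sub_le {y : ℝ × ℝ} {x p e : ℝ} (h : ‖y - (x, p)‖ ≤ e) :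
    |y.1 - x| ≤ e ∧ |y.2 - p| ≤ e := by
  rw [Prod.norm_def] at h
  exact ⟨(le_max_left _ _).trans h, (le_max_right _ _).trans h⟩

/-- The solution of the truncated inverse equation with the initial data of the scheme stays close
to the scheme. -/
theorem RightScheme.exists_near_trajectory {N : ℝ → ℝ → ℝ} {a b c ub m M C : ℝ}
    (hN : ContDiff ℝ 2 (Function.uncurry N)) (hac : a < c) (hcb : c < b) (hub : 0 < ub)
    (hm : 0 < m) (hM : 0 < M) (hC : 0 < C) {pl pr xl xr : ℝ} (hplr : pl ≤ pr)
    (hpl : pl ≤ min m M⁻¹) (hpr : max M m⁻¹ ≤ pr) (hxl : xl ≤ a) (hxr : b ≤ xr) :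
    ∃ κ B : ℝ, 0 < κ ∧ 0 < B ∧ ∀ (h : ℝ) (u u' u'' X X' X'' : ℝ → ℝ),
      RightScheme N a b c ub h u u' u'' X X' X'' →
      (∀ x ∈ Icc a c, m ≤ u' x ∧ u' x ≤ M) → (∀ v ∈ Icc (u c) ub, m ≤ X' v ∧ X' v ≤ M) →
      (∀ x ∈ Ico a c, |u'' x - Ncal N (u x) x| ≤ C * h ^ 2) →
      (∀ v ∈ Ico (u c) ub, |X'' v + Ncal N v (X v) * (X' v) ^ 3| ≤ C * h ^ 2) →
      ∃ y : ℝ → ℝ × ℝ, y 0 = (a, 1 / u' a) ∧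
        (∀ v ∈ Icc 0 ub,
          HasDerivWithinAt y (clampField N pl pr xl xr v (y v)) (Icc 0 ub) v ∧
          ‖clampField N pl pr xl xr v (y v)‖ ≤ B) ∧
        (∀ x ∈ Icc a c, ‖y (u x) - (x, (u' x)⁻¹)‖ ≤ κ * h ^ 2) ∧
        ∀ v ∈ Icc (u c) ub, ‖y v - (X v, X' v)‖ ≤ κ * h ^ 2 := by
  obtain ⟨L, B, hL, hB, hF⟩ := exists_clampField_bounds hN hplr
    (hxl.trans ((hac.trans hcb).le.trans hxr)) ub
  have hx : Icc a b ⊆ Icc xl xr := Icc_subset_Icc hxl hxr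
  set κs := C / m ^ 2 / (M * L) * Real.exp (M * L * (b - a)) with hκs
  have hκs0 : 0 < κs := by positivity
  refine ⟨κs + (κs + C / L) * Real.exp (L * ub), B, by positivity, hB,
    fun h u u' u'' X X' X'' S bu bX eu eX => ?_⟩
  obtain ⟨y, hy0, hy⟩ := exists_solution_of_lipschitz_of_bounded hub.le hL.le hB.le
    (fun v hv y z => (hF v hv y).2 z) (fun v hv y => (hF v hv y).1)
    (continuous_clampField hN.continuous pl pr xl xr) (a, 1 / u' a)
  have hE : 0 ≤ C * h ^ 2 := by positivity
  have hs : ∀ x ∈ Icc a c, ‖y (u x) - (x, (u' x)⁻¹)‖ ≤ κs * h ^ 2 := by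
    intro x hxm
    refine (S.norm_sub_le_on_straight hcb hm hM hL hE bu (fun x hx => ?_) hx
      (fun v hv y z => (hF v hv y).2 z) eu hy0 hy x hxm).trans_eq (by rw [hκs]; ring)
    have hpos : 0 < u' x := hm.trans_le (bu x hx).1
    exact ⟨(hpl.trans (min_le_right _ _)).trans (inv_anti₀ hpos (bu x hx).2),
      (inv_anti₀ hm (bu x hx).1).trans ((le_max_right _ _).trans hpr)⟩
  have hi := S.norm_sub_le_on_inverse hac hL hE (by positivity)
    (fun v hv => ⟨(hpl.trans (min_le_left _ _)).trans (bX v hv).1,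
      (bX v hv).2.trans ((le_max_left _ _).trans hpr)⟩) hx
    (fun v hv y z => (hF v hv y).2 z) eX hy (hs c ⟨hac.le, le_rfl⟩)
  refine ⟨y, hy0, fun v hv => ⟨hy v hv, (hF v hv _).1⟩, fun x hx => (hs x hx).trans ?_,
    fun v hv => (hi v hv).trans ?_⟩
  · have : 0 ≤ (κs + C / L) * Real.exp (L * ub) := by positivity
    gcongr
    linarith
  · have : 0 ≤ κs * h ^ 2 := by positivity
    refine (le_add_of_nonneg_left this).trans_eq ?_
    ring

/-- under hypothesis (H) there are constants `κ₁, κ₂, h₀ > 0` (depending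
only on the data of the problem) such that for all meshes of maximal step size `h ≤ h₀`
and every scheme pair `(ũ, x̃)` satisfying the sign inequalities, there is an exact
solution `x̂` of the inverse equation on `[0,u_b]` with `x̂(0) = a`, `x̂'(0) = 1/ũ'(a)`,
strictly increasing with image covering `[a,c]`, whose inverse `û` approximates `ũ`
within `κ₁h²` in the C¹-norm on `[a,c]`, while `x̂` approximates `x̃` within `κ₂h²`
in the C¹-norm on `[ũ(c), u_b]`. -/
theorem scheme_approximates_shooting_inverse_solution
    (a b c ub : ℝ) (hab : a < b) (hub : 0 < ub) (hc : c ∈ Ioo a b)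
    (N : ℝ → ℝ → ℝ) (hN : ContDiff ℝ 2 (Function.uncurry N))
    (hH : HypH N a b) :
    ∃ κ₁ κ₂ h₀ : ℝ, 0 < κ₁ ∧ 0 < κ₂ ∧ 0 < h₀ ∧
      ∀ ms mi : Mesh,
        ms.pt 0 = a → ms.pt ms.n = c → mi.pt 0 = 0 → mi.pt mi.n = ub →
        ∀ u u' X X' : ℝ → ℝ, GoodPair N a b c ub ms mi u u' X X' →
        ∀ h : ℝ, h ≤ h₀ → StepLe ms mi (u c) h →
        ∃ xh xh' xh'' : ℝ → ℝ,
          IsC2On xh xh' xh'' (Icc 0 ub) ∧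
          (∀ v ∈ Icc (0:ℝ) ub, xh'' v = -(Ncal N v (xh v)) * (xh' v) ^ 3) ∧
          xh 0 = a ∧ xh' 0 = 1 / u' a ∧
          StrictMonoOn xh (Icc 0 ub) ∧
          Icc a c ⊆ xh '' Icc 0 ub ∧
          ∃ uh uh' : ℝ → ℝ,
            (∀ v ∈ Icc (0:ℝ) ub, uh (xh v) = v) ∧
            (∀ x ∈ Icc a c, HasDerivWithinAt uh (uh' x) (Icc a c) x) ∧
            (∀ x ∈ Icc a c,
              |u x - uh x| ≤ κ₁ * h ^ 2 ∧ |u' x - uh' x| ≤ κ₁ * h ^ 2) ∧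
            (∀ v ∈ Icc (u c) ub,
              |X v - xh v| ≤ κ₂ * h ^ 2 ∧ |X' v - xh' v| ≤ κ₂ * h ^ 2) := by
  obtain ⟨hac, hcb⟩ := hc
  obtain ⟨m, M, hm, hM, hbd⟩ := RightScheme.exists_uniform_bounds hN hac hcb hub
  obtain ⟨C, hC, hcons⟩ := RightScheme.exists_consistency hN hac hcb hub hM
  set P := min m M⁻¹ with hP
  have hP0 : 0 < P := lt_min hm (inv_pos.2 hM)
  set k := P / 2 with hk
  have hk0 : 0 < k := half_pos hP0
  set pr := max M m⁻¹ + k with hpr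
  have hpr0 : 0 < max M m⁻¹ := hM.trans_le (le_max_left _ _)
  obtain ⟨κ, B, hκ, hB, hnear⟩ := RightScheme.exists_near_trajectory (pl := k) (pr := pr)
    (xl := a - 1) (xr := b + 1) hN hac hcb hub hm hM hC (by linarith) (by linarith) (by linarith)
    (by linarith) (by linarith)
  set r := min k (min 1 (b - c)) with hr
  have hr0 : 0 < r := lt_min hk0 (lt_min one_pos (sub_pos.2 hcb))
  refine ⟨κ / k + M * κ / k + B * (κ / k) / k ^ 2, κ, Real.sqrt (r / κ), by positivity, hκ,
    by positivity, ?_⟩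
  intro ms mi ms0 msn mi0 min_n u u' X X' hg h hh hstep
  have hh0 := hstep.pos
  obtain ⟨u'', X'', S⟩ := hg.exists_rightScheme ⟨hac, hcb⟩ hH ms0 msn mi0 min_n hstep
  obtain ⟨bu, bu'', bX, bX''⟩ := hbd h u u' u'' X X' X'' S
  obtain ⟨eu, eX⟩ := hcons h u u' u'' X X' X'' S
    (fun x hx => abs_le.2 ⟨by linarith [(bu x hx).1], (bu x hx).2⟩) bu''
    (fun v hv => abs_le.2 ⟨by linarith [(bX v hv).1], (bX v hv).2⟩) bX''
  obtain ⟨y, hy0, hy, hys, hyi⟩ := hnear h u u' u'' X X' X'' S bu bX eu eX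
  have hsmall : κ * h ^ 2 ≤ r := by
    have := (Real.le_sqrt' hh0).1 hh
    rwa [le_div_iff₀ hκ, mul_comm] at this
  have hsk : κ * h ^ 2 ≤ k := hsmall.trans (min_le_left _ _)
  have hs1 : κ * h ^ 2 ≤ 1 := hsmall.trans ((min_le_right _ _).trans (min_le_left _ _))
  have hsb : κ * h ^ 2 ≤ b - c := hsmall.trans ((min_le_right _ _).trans (min_le_right _ _))
  have hMpr := le_max_left M m⁻¹
  have hmpr := le_max_right M m⁻¹
  have hPm : P ≤ m := min_le_left _ _
  have hPM : P ≤ M⁻¹ := min_le_right _ _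
  have hmem : ∀ v ∈ Icc 0 ub, (y v).1 ∈ Icc (a - 1) (b + 1) ∧ (y v).2 ∈ Icc k pr := by
    intro v hv
    rcases le_total (u c) v with hcv | hcv
    · obtain ⟨h1, h2⟩ := abs_sub_le_of_norm_sub_le (hyi v ⟨hcv, hv.2⟩)
      rw [abs_le] at h1 h2
      have hX := S.X_mem ⟨hcv, hv.2⟩
      have hX' := bX v ⟨hcv, hv.2⟩
      exact ⟨⟨by linarith [hX.1], by linarith [hX.2]⟩,
        by linarith [hX'.1], by linarith [hX'.2]⟩
    · obtain ⟨x, hx, rfl⟩ : v ∈ u '' Icc a c :=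
        intermediate_value_Icc hac.le S.cont_u ⟨S.u_left.trans_le hv.1, hcv⟩
      obtain ⟨h1, h2⟩ := abs_sub_le_of_norm_sub_le (hys x hx)
      rw [abs_le] at h1 h2
      have hpos : 0 < u' x := hm.trans_le (bu x hx).1
      have h3 := inv_anti₀ hpos (bu x hx).2
      have h4 := inv_anti₀ hm (bu x hx).1
      exact ⟨⟨by linarith [hx.1], by linarith [hx.2]⟩, by linarith, by linarith⟩
  have hfield : ∀ v ∈ Icc 0 ub, clampField N k pr (a - 1) (b + 1) v (y v) =
      ((y v).2, -(Ncal N v (y v).1) * (y v).2 ^ 3) := fun v hv =>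
    clampField_of_mem (hmem v hv).1 (hmem v hv).2
  have d1 : ∀ v ∈ Icc 0 ub, HasDerivWithinAt (fun v => (y v).1) (y v).2 (Icc 0 ub) v := by
    intro v hv
    have := (hy v hv).1
    rw [hfield v hv] at this
    exact (hasFDerivAt_fst.comp_hasDerivWithinAt v this :)
  have d2 : ∀ v ∈ Icc 0 ub, HasDerivWithinAt (fun v => (y v).2)
      (-(Ncal N v (y v).1) * (y v).2 ^ 3) (Icc 0 ub) v := by
    intro v hv
    have := (hy v hv).1
    rw [hfield v hv] at this
    exact (hasFDerivAt_snd.comp_hasDerivWithinAt v this :)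
  have c1 : ContinuousOn (fun v => (y v).1) (Icc 0 ub) := fun v hv => (d1 v hv).continuousWithinAt
  have c2 : ContinuousOn (fun v => (y v).2) (Icc 0 ub) := fun v hv => (d2 v hv).continuousWithinAt
  have hlip : ∀ v ∈ Icc 0 ub, ∀ w ∈ Icc 0 ub, |(y v).2 - (y w).2| ≤ B * |v - w| := by
    intro v hv w hw
    refine (convex_Icc 0 ub).norm_image_sub_le_of_norm_hasDerivWithin_le d2 (fun z hz => ?_) hw hv
    have := (hy z hz).2
    rw [hfield z hz] at this
    exact (norm_snd_le _).trans this
  have himg : Icc a c ⊆ (fun v => (y v).1) '' Icc 0 ub := by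
    refine Subset.trans (Icc_subset_Icc ?_ ?_) (intermediate_value_Icc hub.le c1)
    · simp only [hy0, le_refl]
    · have := (abs_sub_le_of_norm_sub_le (hyi ub ⟨S.u_right_lt.le, le_rfl⟩)).1
      rw [S.X_right, abs_le] at this
      linarith
  obtain ⟨hmono, uh, hleft, huh⟩ := exists_inverse_of_le_deriv hk0 d1
    (fun v hv => (hmem v hv).2.1) himg
  refine ⟨fun v => (y v).1, fun v => (y v).2, fun v => -(Ncal N v (y v).1) * (y v).2 ^ 3,
    ⟨d1, d2, ?_⟩, fun _ _ => rfl, congrArg Prod.fst hy0, congrArg Prod.snd hy0, hmono, himg,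
    uh, fun x => (y (uh x)).2⁻¹, hleft, fun x hx => (huh x hx).2.1, fun x hx => ?_, fun v hv => ?_⟩
  · have : ContinuousOn (fun v => Ncal N v (y v).1) (Icc 0 ub) :=
      (contDiff_Ncal hN).continuous.comp_continuousOn (continuousOn_id.prodMk c1)
    exact this.neg.mul (c2.pow 3)
  · obtain ⟨hux, -, hclose⟩ := huh x hx
    obtain ⟨h1, h2⟩ := abs_sub_le_of_norm_sub_le (hys x hx)
    have hu := S.u_mem x hx
    have e0 : |u x - uh x| ≤ κ * h ^ 2 / k := (hclose _ hu).trans (by gcongr)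
    have e1 : |u' x - (y (u x)).2⁻¹| ≤ M * (κ * h ^ 2) / k :=
      abs_sub_inv_le hk0 (hm.trans_le (bu x hx).1) (bu x hx).2 (hmem _ hu).2.1 h2
    have e2 : |(y (u x)).2⁻¹ - (y (uh x)).2⁻¹| ≤ B * (κ * h ^ 2 / k) / k ^ 2 := by
      refine (abs_inv_sub_inv_le hk0 (hmem _ hu).2.1 (hmem _ hux).2.1).trans ?_
      have := (hlip _ hu _ hux).trans (mul_le_mul_of_nonneg_left e0 hB.le)
      gcongr
    have e3 := abs_sub_le (u' x) (y (u x)).2⁻¹ (y (uh x)).2⁻¹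
    have hexpand : (κ / k + M * κ / k + B * (κ / k) / k ^ 2) * h ^ 2 =
        κ * h ^ 2 / k + M * (κ * h ^ 2) / k + B * (κ * h ^ 2 / k) / k ^ 2 := by ring
    have n0 : 0 ≤ κ * h ^ 2 / k := by positivity
    have n1 : 0 ≤ M * (κ * h ^ 2) / k := by positivity
    have n2 : 0 ≤ B * (κ * h ^ 2 / k) / k ^ 2 := by positivity
    rw [hexpand]
    exact ⟨by linarith, by linarith⟩
  · obtain ⟨h1, h2⟩ := abs_sub_le_of_norm_sub_le (hyi v hv)
    rw [abs_sub_comm (X v), abs_sub_comm (X' v)]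
    exact ⟨h1, h2⟩
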